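/- arXiv:0902.2690 — 2 statements merged into one kernel-verified Lean document; each statement's English description precedes it below -/
import Mathlib

section
/- Let n ≥ 3 and let f : ℝⁿ → ℂ be a smooth compactly supported function. Then ‖f‖_{L^{2n/(n−2)}(ℝⁿ)} ≤ (1/π) · ( n · vol(Bⁿ) / (n−2) )^{1/n} · ‖∇f‖_{L²(ℝⁿ)}, where vol(Bⁿ) denotes the Lebesgue measure of the unit ball of ℝⁿ and ‖∇f‖_{L²}² = ∫_{ℝⁿ} |∇f(x)|² dx. -/
open MeasureTheory ENNReal Real
open scoped FourierTransform SchwartzMap LineDeriv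

lemma sob_plancherel {n : ℕ} (h : EuclideanSpace ℝ (Fin n) → ℂ) (h1 : Integrable h)
    (h2 : MemLp h 2 volume) : eLpNorm (𝓕 h) 2 volume = eLpNorm h 2 volume := by
  set H : Lp ℂ 2 (volume : Measure (EuclideanSpace ℝ (Fin n))) := h2.toLp h with hH
  have key : ∀ᵐ x, (𝓕 H : Lp ℂ 2 (volume : Measure (EuclideanSpace ℝ (Fin n)))) x = 𝓕 h x := by
    apply ae_eq_of_integral_contDiff_smul_eq
    · exact (Lp.memLp _).locallyIntegrable (by norm_num)
    · apply Continuous.locallyIntegrable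
      exact VectorFourier.fourierIntegral_continuous Real.continuous_fourierChar
        (by exact continuous_inner) h1
    · intro g hg hgs
      have hg' : ContDiff ℝ (⊤ : ℕ∞) (fun x => (g x : ℂ)) := Complex.ofRealCLM.contDiff.comp hg
      have hgs' : HasCompactSupport (fun x => (g x : ℂ)) := hgs.comp_left (g := fun t : ℝ => (t : ℂ)) (by simp)
      let φ : 𝓢(EuclideanSpace ℝ (Fin n), ℂ) := hgs'.toSchwartzMap hg'
      have hφ : ∀ x, φ x = (g x : ℂ) := fun x => rfl
      have e1 := congrArg (fun T => T φ) (Lp.fourier_toTemperedDistribution_eq H)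
      simp only [TemperedDistribution.fourier_apply, Lp.toTemperedDistribution_apply] at e1
      have e2 := VectorFourier.integral_fourierIntegral_smul_eq_flip (𝕜 := ℝ) (e := 𝐞) (L := innerₗ (EuclideanSpace ℝ (Fin n)))
        (f := ⇑φ) (g := h) (μ := volume) (ν := volume) Real.continuous_fourierChar (by exact continuous_inner) φ.integrable h1
      have e3 : ∀ x, g x • (𝓕 H : Lp ℂ 2 (volume : Measure (EuclideanSpace ℝ (Fin n)))) x = φ x • (𝓕 H : Lp ℂ 2 (volume : Measure (EuclideanSpace ℝ (Fin n)))) x := by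
        intro x; rw [hφ]; simp
      have e4 : ∀ x, g x • 𝓕 h x = φ x • 𝓕 h x := by
        intro x; rw [hφ]; simp
      simp_rw [e3, e4]
      rw [← e1]
      have e5 : ∫ x, (𝓕 φ) x • H x = ∫ x, (𝓕 φ) x • h x := by
        apply integral_congr_ae
        filter_upwards [h2.coeFn_toLp] with x hx
        rw [hx]
      rw [e5]
      rw [flip_innerₗ] at e2
      exact e2
  rw [← eLpNorm_congr_ae key]
  have := Lp.norm_fourier_eq H
  rw [Lp.norm_def, Lp.norm_def, ENNReal.toReal_eq_toReal_iff' (Lp.eLpNorm_ne_top _) (Lp.eLpNorm_ne_top _)] at this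
  rw [this]
  exact eLpNorm_congr_ae h2.coeFn_toLp

lemma sob_weight {n : ℕ} (hn : 3 ≤ n) (r : ℝ) (hr : 0 ≤ r) :
    ∫⁻ x in Metric.ball (0 : EuclideanSpace ℝ (Fin n)) r, ENNReal.ofReal (‖x‖⁻¹ ^ 2)
      = ENNReal.ofReal (n * (volume (Metric.ball (0 : EuclideanSpace ℝ (Fin n)) 1)).toReal
            / (n - 2 : ℝ) * r ^ (n - 2)) := by
  have : Nonempty (Fin n) := ⟨⟨0, by omega⟩⟩
  have hfr : Module.finrank ℝ (EuclideanSpace ℝ (Fin n)) = n := by simp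
  have hpow : ∀ y ∈ Set.Ioo (0:ℝ) r, y ^ (n - 1) • (y⁻¹ ^ 2) = y ^ (n - 3) := by
    intro y hy
    have : n - 1 = (n - 3) + 2 := by omega
    rw [this, pow_add, smul_eq_mul, mul_assoc, ← mul_pow, mul_inv_cancel₀ hy.1.ne']; simp
  have hint : IntegrableOn (fun x : EuclideanSpace ℝ (Fin n) => ‖x‖⁻¹ ^ 2) (Metric.ball 0 r) := by
    rw [integrableOn_fun_norm_addHaar volume (f := fun y : ℝ => y⁻¹ ^ 2), hfr,
      integrableOn_congr_fun hpow measurableSet_Ioo]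
    exact ((continuous_pow (n-3)).integrableOn_Icc (a := 0) (b := r)).mono_set Set.Ioo_subset_Icc_self
  rw [← ofReal_integral_eq_lintegral_ofReal hint (by filter_upwards with x; positivity)]
  congr 1
  rw [← integral_indicator Metric.isOpen_ball.measurableSet]
  have e : ∀ x : EuclideanSpace ℝ (Fin n), (Metric.ball (0:EuclideanSpace ℝ (Fin n)) r).indicator (fun x => ‖x‖⁻¹ ^ 2) x
      = (fun y : ℝ => (Set.Iio r).indicator (fun y => y⁻¹ ^ 2) y) ‖x‖ := by
    intro x
    by_cases hx : ‖x‖ < r <;> simp [Set.indicator_apply, hx, Metric.mem_ball, dist_zero_right]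
  simp_rw [e]
  rw [integral_fun_norm_addHaar volume (fun y : ℝ => (Set.Iio r).indicator (fun y => y⁻¹ ^ 2) y), hfr]
  have e2 : ∫ y in Set.Ioi (0:ℝ), y ^ (n-1) • (Set.Iio r).indicator (fun y => y⁻¹ ^ 2) y = ∫ y in Set.Ioo (0:ℝ) r, y ^ (n-3) := by
    rw [← setIntegral_congr_fun measurableSet_Ioo hpow, ← Set.Ioi_inter_Iio, ← setIntegral_indicator measurableSet_Iio]
    congr 1; ext y
    simp [Set.indicator_apply]
  rw [e2, ← integral_Ioc_eq_integral_Ioo, ← intervalIntegral.integral_of_le hr, integral_pow]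
  have c : ((n - 3 : ℕ) : ℝ) + 1 = n - 2 := by
    rw [Nat.cast_sub hn]; push_cast; ring
  have c' : n - 3 + 1 = n - 2 := by omega
  rw [c, c']
  simp only [nsmul_eq_mul, smul_eq_mul, Measure.real]
  rw [zero_pow (by omega)]
  ring

lemma sob_energy {n : ℕ} (G : 𝓢(EuclideanSpace ℝ (Fin n), ℂ)) :
    ∑ i : Fin n, ∫ x, ‖fderiv ℝ (𝓕 ⇑G) x (EuclideanSpace.single i 1)‖ ^ 2
      = 4 * π ^ 2 * ∫ x, ‖x‖ ^ 2 * ‖G x‖ ^ 2 := by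
  have h1 : ∀ i : Fin n, ∫ x, ‖fderiv ℝ (𝓕 ⇑G) x (EuclideanSpace.single i 1)‖ ^ 2
      = 4 * π ^ 2 * ∫ x, (x i) ^ 2 * ‖G x‖ ^ 2 := by
    intro i
    have := SchwartzMap.integral_norm_sq_fourier ((-(2 * π * Complex.I)) • SchwartzMap.smulLeftCLM ℂ (inner ℝ · (EuclideanSpace.single i (1:ℝ))) G)
    rw [← SchwartzMap.lineDerivOp_fourier_eq] at this
    simp only [SchwartzMap.lineDerivOp_apply_eq_fderiv] at this
    rw [SchwartzMap.fourier_coe] at this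
    rw [this, ← integral_const_mul]
    congr 1; ext x
    have ht : (fun x : EuclideanSpace ℝ (Fin n) => inner ℝ x (EuclideanSpace.single i (1:ℝ))).HasTemperateGrowth := by fun_prop
    rw [smul_apply, SchwartzMap.smulLeftCLM_apply_apply ht, norm_smul, norm_smul]
    simp [EuclideanSpace.inner_single_right, abs_of_pos Real.pi_pos, mul_pow]
    left; ring
  have hint : ∀ i : Fin n, Integrable (fun x : EuclideanSpace ℝ (Fin n) => (x i) ^ 2 * ‖G x‖ ^ 2) := by
    intro i
    have ht : (fun x : EuclideanSpace ℝ (Fin n) => inner ℝ x (EuclideanSpace.single i (1:ℝ))).HasTemperateGrowth := by fun_prop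
    have := ((SchwartzMap.smulLeftCLM ℂ (inner ℝ · (EuclideanSpace.single i (1:ℝ))) G).memLp 2 volume).integrable_norm_pow (by norm_num)
    refine this.congr (Filter.Eventually.of_forall fun x => ?_)
    simp only
    rw [SchwartzMap.smulLeftCLM_apply_apply ht, norm_smul]
    simp [EuclideanSpace.inner_single_right, mul_pow]
  simp_rw [h1]
  rw [← Finset.mul_sum, ← integral_finsetSum _ (fun i _ => hint i)]
  congr 2; ext x
  rw [← Finset.sum_mul, EuclideanSpace.norm_sq_eq]
  simp

lemma sob_layer {X : Type*} [MeasurableSpace X] (μ : Measure X) [SFinite μ] (T : X → ℝ)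
    (hT : Measurable T) (w : X → ℝ≥0∞) (hw : Measurable w) :
    ∫⁻ s in Set.Ioi (0:ℝ), ∫⁻ x, {x | s ≤ T x}.indicator w x ∂μ
      = ∫⁻ x, ENNReal.ofReal (T x) * w x ∂μ := by
  rw [lintegral_lintegral_swap]
  · congr 1; ext x
    have : ∀ s : ℝ, {x | s ≤ T x}.indicator w x = (Set.Iic (T x)).indicator (fun _ => w x) s := by
      intro s; simp [Set.indicator_apply]
    simp_rw [this]
    rw [lintegral_indicator measurableSet_Iic, lintegral_const, Measure.restrict_restrict measurableSet_Iic,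
      Measure.restrict_apply_univ, Set.inter_comm, Set.Ioi_inter_Iic, Real.volume_Ioc, sub_zero, mul_comm]
  · have : (Function.uncurry fun (s : ℝ) (x : X) => {x | s ≤ T x}.indicator w x)
        = {p : ℝ × X | p.1 ≤ T p.2}.indicator (fun p => w p.2) := by
      ext p; simp [Function.uncurry, Set.indicator_apply]
    rw [this]
    exact ((hw.comp measurable_snd).indicator
      (measurableSet_le measurable_fst (hT.comp measurable_snd))).aemeasurable

lemma sob_low {n : ℕ} (hn : 3 ≤ n) (G : 𝓢(EuclideanSpace ℝ (Fin n), ℂ)) (Q : ℝ) (hQ0 : 0 ≤ Q)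
    (hQ : ∫⁻ x, ENNReal.ofReal (‖x‖ ^ 2) * ‖G x‖ₑ ^ 2 ≤ ENNReal.ofReal Q) (r : ℝ) (hr : 0 ≤ r)
    (x : EuclideanSpace ℝ (Fin n)) :
    ‖𝓕 ((Metric.ball 0 r).indicator ⇑G) x‖ ^ 2 ≤
      (n * (volume (Metric.ball (0 : EuclideanSpace ℝ (Fin n)) 1)).toReal
            / (n - 2 : ℝ)) * r ^ (n - 2) * Q := by
  have hn' : (3:ℝ) ≤ n := by exact_mod_cast hn
  set A := (n * (volume (Metric.ball (0 : EuclideanSpace ℝ (Fin n)) 1)).toReal / (n - 2 : ℝ)) with hA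
  have hA0 : 0 ≤ A := div_nonneg (by positivity) (by linarith)
  have : Nonempty (Fin n) := ⟨⟨0, by omega⟩⟩
  have h1 : ‖𝓕 ((Metric.ball 0 r).indicator ⇑G) x‖ₑ ≤ ∫⁻ y in Metric.ball 0 r, ‖G y‖ₑ := by
    rw [Real.fourier_eq]
    refine (enorm_integral_le_lintegral_enorm _).trans ?_
    rw [← lintegral_indicator Metric.isOpen_ball.measurableSet]
    apply lintegral_mono
    intro y
    by_cases hy : y ∈ Metric.ball (0 : EuclideanSpace ℝ (Fin n)) r
    · simp only [Set.indicator_of_mem hy]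
      rw [← ofReal_norm, ← ofReal_norm, Circle.norm_smul]
    · simp [Set.indicator_of_notMem hy]
  have h2 : ∫⁻ y in Metric.ball 0 r, ‖G y‖ₑ =
      ∫⁻ y in Metric.ball 0 r, ((fun y : EuclideanSpace ℝ (Fin n) => ENNReal.ofReal ‖y‖⁻¹) * (fun y => ENNReal.ofReal ‖y‖ * ‖G y‖ₑ)) y := by
    apply lintegral_congr_ae
    apply ae_restrict_of_ae
    have : ∀ᵐ y : EuclideanSpace ℝ (Fin n), y ≠ 0 := by
      simp [ae_iff]
    filter_upwards [this] with y hy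
    simp only [Pi.mul_apply]
    rw [← mul_assoc, ← ENNReal.ofReal_mul (by positivity), inv_mul_cancel₀ (norm_ne_zero_iff.2 hy)]
    simp
  have h3 := ENNReal.lintegral_mul_le_Lp_mul_Lq (volume.restrict (Metric.ball (0:EuclideanSpace ℝ (Fin n)) r))
    Real.HolderConjugate.two_two (f := fun y => ENNReal.ofReal ‖y‖⁻¹) (g := fun y => ENNReal.ofReal ‖y‖ * ‖G y‖ₑ)
    (by fun_prop) (by have := G.continuous.measurable; fun_prop)
  have h4 : (∫⁻ y in Metric.ball (0:EuclideanSpace ℝ (Fin n)) r, (ENNReal.ofReal ‖y‖⁻¹) ^ (2:ℝ)) = ENNReal.ofReal (A * r ^ (n-2)) := by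
    rw [← sob_weight hn r hr]
    congr 1; ext y
    rw [ENNReal.ofReal_pow (by positivity)]; norm_cast
  have h5 : (∫⁻ y in Metric.ball (0:EuclideanSpace ℝ (Fin n)) r, (ENNReal.ofReal ‖y‖ * ‖G y‖ₑ) ^ (2:ℝ)) ≤ ENNReal.ofReal Q := by
    refine (setLIntegral_le_lintegral _ _).trans (le_trans (le_of_eq ?_) hQ)
    congr 1; ext y
    rw [ENNReal.ofReal_pow (by positivity), ← mul_pow]; norm_cast
  rw [h4] at h3
  have h6 : ‖𝓕 ((Metric.ball 0 r).indicator ⇑G) x‖ₑ ≤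
      ENNReal.ofReal (A * r ^ (n-2)) ^ (1/2:ℝ) * ENNReal.ofReal Q ^ (1/2:ℝ) := by
    refine h1.trans (h2.le.trans (h3.trans ?_))
    gcongr
  rw [← ENNReal.mul_rpow_of_nonneg _ _ (by norm_num), ← ENNReal.ofReal_mul (by positivity),
    ENNReal.ofReal_rpow_of_nonneg (by positivity) (by norm_num), ← ofReal_norm,
    ENNReal.ofReal_le_ofReal_iff (by positivity), ← Real.sqrt_eq_rpow] at h6
  calc _ ≤ (√(A * r ^ (n-2) * Q)) ^ 2 := by gcongr
    _ = _ := Real.sq_sqrt (by positivity)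

lemma sob_main {n : ℕ} (hn : 3 ≤ n) (G : 𝓢(EuclideanSpace ℝ (Fin n), ℂ)) (Q : ℝ) (hQ0 : 0 < Q)
    (hQ : ∫⁻ x, ENNReal.ofReal (‖x‖ ^ 2) * ‖G x‖ₑ ^ 2 ≤ ENNReal.ofReal Q) :
    eLpNorm (𝓕 ⇑G) (ENNReal.ofReal (2 * n / (n - 2 : ℝ))) volume ≤
      ENNReal.ofReal (2 * (n * (volume (Metric.ball (0 : EuclideanSpace ℝ (Fin n)) 1)).toReal
            / (n - 2 : ℝ)) ^ ((1:ℝ)/n) * √Q) := by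
  have hn' : (3:ℝ) ≤ n := by exact_mod_cast hn
  have hlow := sob_low hn G Q hQ0.le hQ
  have : Nonempty (Fin n) := ⟨⟨0, by omega⟩⟩
  set A := (n * (volume (Metric.ball (0 : EuclideanSpace ℝ (Fin n)) 1)).toReal / (n - 2 : ℝ)) with hA
  have hV : 0 < (volume (Metric.ball (0 : EuclideanSpace ℝ (Fin n)) 1)).toReal :=
    ENNReal.toReal_pos (Metric.measure_ball_pos _ _ one_pos).ne' measure_ball_lt_top.ne
  have hA0 : 0 < A := div_pos (by positivity) (by linarith)
  set q : ℝ := 2 / (n - 2) with hq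
  have hq0 : 0 < q := div_pos two_pos (by linarith)
  have hnn : (n:ℝ) - 2 ≠ 0 := by linarith
  have hp : 2 * n / (n - 2 : ℝ) = 2 * q + 2 := by rw [hq]; field_simp; ring
  set g := 𝓕 ⇑G with hg
  have hgc : Continuous g := by
    rw [hg, ← SchwartzMap.fourier_coe]; exact (𝓕 G).continuous
  let T : EuclideanSpace ℝ (Fin n) → ℝ := fun x => ((‖g x‖ / 2) ^ 2 / (A * Q)) ^ q
  have hTm : Measurable T := by
    have := hgc.measurable
    fun_prop
  have hhigh : ∀ s ∈ Set.Ioi (0:ℝ), ∫⁻ x, {x | s ≤ T x}.indicator (fun x => ENNReal.ofReal ((‖g x‖ / 2) ^ 2)) x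
      ≤ ∫⁻ x, {x : EuclideanSpace ℝ (Fin n) | s ≤ ‖x‖ ^ 2}.indicator (fun x => ‖G x‖ₑ ^ 2) x := by
    intro s hs
    have hs : 0 < s := hs
    set B := Metric.ball (0:EuclideanSpace ℝ (Fin n)) (√s) with hB
    have hBm : MeasurableSet B := Metric.isOpen_ball.measurableSet
    have hBs : {x : EuclideanSpace ℝ (Fin n) | s ≤ ‖x‖ ^ 2} = Bᶜ := by
      ext x
      simp only [hB, Set.mem_ofPred_eq, Set.mem_compl_iff, Metric.mem_ball, dist_zero_right, not_lt]
      rw [Real.sqrt_le_left (norm_nonneg _)]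
    rw [hBs]
    have hi : Integrable (⇑G) := G.integrable
    have hdec : ∀ x, g x = 𝓕 (B.indicator ⇑G) x + 𝓕 (Bᶜ.indicator ⇑G) x := by
      intro x
      have e := VectorFourier.fourierIntegral_add (L := innerₗ (EuclideanSpace ℝ (Fin n))) (μ := volume)
        Real.continuous_fourierChar
        (by exact continuous_inner) (hi.indicator hBm) (hi.indicator hBm.compl)
      rw [Set.indicator_self_add_compl] at e
      exact congrFun e x
    have hpl := sob_plancherel (Bᶜ.indicator ⇑G) (hi.indicator hBm.compl) ((G.memLp 2 volume).indicator hBm.compl)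
    have hpl2 : ∫⁻ x, ‖𝓕 (Bᶜ.indicator ⇑G) x‖ₑ ^ 2 = ∫⁻ x, ‖Bᶜ.indicator (⇑G) x‖ₑ ^ 2 := by
      rw [eLpNorm_eq_lintegral_rpow_enorm_toReal (by norm_num) (by norm_num),
        eLpNorm_eq_lintegral_rpow_enorm_toReal (by norm_num) (by norm_num)] at hpl
      have := ENNReal.rpow_left_injective (x := 1 / (2:ℝ≥0∞).toReal) (by norm_num) hpl
      simpa using this
    calc _ ≤ ∫⁻ x, ‖𝓕 (Bᶜ.indicator ⇑G) x‖ₑ ^ 2 := by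
          apply lintegral_mono
          intro x
          by_cases hx : s ≤ T x
          · have hx' : x ∈ {x | s ≤ T x} := hx
            simp only [Set.indicator_of_mem hx']
            have hl := hlow (√s) (Real.sqrt_nonneg s) x
            have hs2 : (√s) ^ (n - 2) ≤ (‖g x‖ / 2) ^ 2 / (A * Q) := by
              have e1 : (√s) ^ (n - 2) = s ^ (q⁻¹) := by
                rw [Real.sqrt_eq_rpow, ← Real.rpow_natCast, ← Real.rpow_mul hs.le,
                  Nat.cast_sub (by omega)]
                congr 1; rw [hq]; push_cast; field_simp
              rw [e1]
              calc s ^ q⁻¹ ≤ (T x) ^ q⁻¹ := by gcongr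
                _ = _ := Real.rpow_rpow_inv (by positivity) hq0.ne'
            have hl2 : ‖𝓕 (B.indicator ⇑G) x‖ ^ 2 ≤ (‖g x‖ / 2) ^ 2 := by
              refine hl.trans ?_
              rw [le_div_iff₀ (by positivity)] at hs2
              linarith
            have hl3 : ‖𝓕 (B.indicator ⇑G) x‖ ≤ ‖g x‖ / 2 :=
              (sq_le_sq₀ (norm_nonneg _) (by positivity)).1 hl2
            have hl4 : ‖g x‖ / 2 ≤ ‖𝓕 (Bᶜ.indicator ⇑G) x‖ := by
              have := norm_add_le (𝓕 (B.indicator ⇑G) x) (𝓕 (Bᶜ.indicator ⇑G) x)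
              rw [← hdec] at this
              linarith
            rw [← ofReal_norm, ← ENNReal.ofReal_pow (norm_nonneg _)]
            gcongr
          · have hx' : x ∉ {x | s ≤ T x} := hx
            simp [Set.indicator_of_notMem hx']
      _ = _ := by
          rw [hpl2]
          congr 1; ext x
          by_cases hx : x ∈ Bᶜ
          · simp only [Set.indicator_of_mem hx]
          · simp only [Set.indicator_of_notMem hx]; simp
  have hGm := G.continuous.measurable
  have hgm := hgc.measurable
  have l1 := sob_layer volume T hTm (fun x => ENNReal.ofReal ((‖g x‖ / 2) ^ 2)) (by fun_prop)
  have l2 := sob_layer volume (fun x : EuclideanSpace ℝ (Fin n) => ‖x‖ ^ 2) (by fun_prop) (fun x => ‖G x‖ₑ ^ 2) (by fun_prop)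
  have l3 : ∫⁻ x, ENNReal.ofReal (T x) * ENNReal.ofReal ((‖g x‖ / 2) ^ 2) ≤ ENNReal.ofReal Q := by
    rw [← l1]
    refine le_trans ?_ hQ
    rw [← l2]
    exact setLIntegral_mono' measurableSet_Ioi hhigh
  set p := 2 * q + 2 with hpdef
  have hp0 : 0 < p := by positivity
  set C : ℝ := 2 ^ p * (A * Q) ^ q with hC
  have hC0 : 0 < C := by positivity
  have l4 : ∀ x, ‖g x‖ₑ ^ p = ENNReal.ofReal C * (ENNReal.ofReal (T x) * ENNReal.ofReal ((‖g x‖ / 2) ^ 2)) := by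
    intro x
    have hT0 : 0 ≤ T x := by positivity
    rw [← ofReal_norm, ENNReal.ofReal_rpow_of_nonneg (norm_nonneg _) hp0.le, ← ENNReal.ofReal_mul hT0,
      ← ENNReal.ofReal_mul hC0.le]
    congr 1
    obtain ⟨y, hy⟩ : ∃ y, y = ‖g x‖ / 2 := ⟨_, rfl⟩
    have hy0 : 0 ≤ y := by rw [hy]; positivity
    have hy2 : ‖g x‖ = 2 * y := by rw [hy]; ring
    simp only [T, ← hy]
    rw [hy2, Real.mul_rpow two_pos.le hy0, hC, Real.div_rpow (by positivity) (by positivity)]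
    have e : y ^ p = (y ^ 2) ^ q * y ^ 2 := by
      rw [hpdef, Real.rpow_add_of_nonneg hy0 (by positivity) (by positivity), Real.rpow_mul hy0]
      norm_cast
    rw [e]
    have : (A * Q) ^ q ≠ 0 := by positivity
    field_simp
  rw [hp, eLpNorm_eq_lintegral_rpow_enorm_toReal (by simpa using hp0) (by simp), ENNReal.toReal_ofReal hp0.le]
  simp_rw [l4]
  rw [lintegral_const_mul' _ _ (by simp)]
  calc _ ≤ (ENNReal.ofReal C * ENNReal.ofReal Q) ^ (1 / p) := by gcongr
    _ = ENNReal.ofReal ((C * Q) ^ (1/p)) := by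
      rw [← ENNReal.ofReal_mul hC0.le, ENNReal.ofReal_rpow_of_nonneg (by positivity) (by positivity)]
    _ = _ := by
      congr 1
      rw [hC, Real.mul_rpow hA0.le hQ0.le]
      have e1 : (2:ℝ) ^ p * (A ^ q * Q ^ q) * Q = 2 ^ p * (A ^ q * Q ^ (q+1)) := by
        rw [Real.rpow_add hQ0, Real.rpow_one]; ring
      rw [e1, Real.mul_rpow (by positivity) (by positivity), Real.mul_rpow (by positivity) (by positivity),
        ← Real.rpow_mul (by positivity), ← Real.rpow_mul (by positivity), ← Real.rpow_mul (by positivity),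
        Real.sqrt_eq_rpow, mul_one_div_cancel hp0.ne', Real.rpow_one]
      have e2 : q * (1 / p) = 1 / n := by rw [← hp, hq]; field_simp
      have e3 : (q + 1) * (1/p) = 1/2 := by rw [hpdef]; field_simp
      rw [e2, e3]; ring

lemma sob_dual_norm {n : ℕ} (L : EuclideanSpace ℝ (Fin n) →L[ℝ] ℝ) :
    ∑ i, ‖L (EuclideanSpace.single i 1)‖ ^ 2 = ‖L‖ ^ 2 := by
  obtain ⟨v, rfl⟩ := (InnerProductSpace.toDual ℝ (EuclideanSpace ℝ (Fin n))).surjective L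
  rw [LinearIsometryEquiv.norm_map, EuclideanSpace.norm_sq_eq]
  simp [EuclideanSpace.inner_single_right]

lemma sob_integrable {E F : Type*} [NormedAddCommGroup E] [NormedSpace ℝ E] [FiniteDimensional ℝ E]
    [MeasureSpace E] [BorelSpace E] [IsFiniteMeasureOnCompacts (volume : Measure E)]
    [NormedAddCommGroup F] [NormedSpace ℝ F] (u : E → F)
    (hu : ContDiff ℝ (⊤ : ℕ∞) u) (hs : HasCompactSupport u) :
    Integrable (fun x => ‖fderiv ℝ u x‖ ^ 2) := by
  have hc : Continuous (fderiv ℝ u) := hu.continuous_fderiv (by simp)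
  apply Continuous.integrable_of_hasCompactSupport (by fun_prop)
  exact (hs.fderiv ℝ).comp_left (g := fun L => ‖L‖ ^ 2) (by simp)

lemma sob_real {n : ℕ} (hn : 3 ≤ n) (u : EuclideanSpace ℝ (Fin n) → ℝ)
    (hu : ContDiff ℝ (⊤ : ℕ∞) u) (hs : HasCompactSupport u) (D : ℝ) (hD0 : 0 < D)
    (hD : ∫ x, ‖fderiv ℝ u x‖ ^ 2 ≤ D) :
    eLpNorm u (ENNReal.ofReal (2 * n / (n - 2 : ℝ))) volume ≤
      ENNReal.ofReal ((1 / π) * (n * (volume (Metric.ball (0 : EuclideanSpace ℝ (Fin n)) 1)).toReal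
            / (n - 2 : ℝ)) ^ ((1:ℝ)/n) * √D) := by
  have hg' : ContDiff ℝ (⊤ : ℕ∞) (fun x => (u x : ℂ)) := Complex.ofRealCLM.contDiff.comp hu
  have hgs' : HasCompactSupport (fun x => (u x : ℂ)) :=
    hs.comp_left (g := fun t : ℝ => (t : ℂ)) (by simp)
  let φ : 𝓢(EuclideanSpace ℝ (Fin n), ℂ) := hgs'.toSchwartzMap hg'
  let G : 𝓢(EuclideanSpace ℝ (Fin n), ℂ) := 𝓕⁻ φ
  have hG : 𝓕 ⇑G = fun x => (u x : ℂ) := by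
    rw [← SchwartzMap.fourier_coe, FourierTransform.fourier_fourierInv_eq]; rfl
  have hpi := Real.pi_pos
  have hfd : ∀ x v, ‖fderiv ℝ (fun x => (u x : ℂ)) x v‖ = ‖fderiv ℝ u x v‖ := by
    intro x v
    have h1 : HasFDerivAt (fun x => (u x : ℂ)) (Complex.ofRealCLM.comp (fderiv ℝ u x)) x :=
      Complex.ofRealCLM.hasFDerivAt.comp x ((hu.differentiable (by simp)) x).hasFDerivAt
    rw [h1.fderiv]; simp
  have he := sob_energy G
  rw [hG] at he
  simp_rw [hfd] at he
  rw [← integral_finsetSum] at he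
  · simp_rw [sob_dual_norm] at he
    have hint : Integrable (fun x => ‖x‖ ^ 2 * ‖G x‖ ^ 2) := by
      have h1 := ((SchwartzMap.smulLeftCLM ℂ (fun x : EuclideanSpace ℝ (Fin n) => ‖x‖ ^ 2) G).integrable (μ := volume)).norm
      have h2 := h1.bdd_mul (c := SchwartzMap.seminorm ℝ 0 0 G) (f := fun x => ‖G x‖)
        G.continuous.norm.aestronglyMeasurable
        (Filter.Eventually.of_forall fun x => by simpa using SchwartzMap.norm_le_seminorm ℝ G x)
      refine h2.congr (Filter.Eventually.of_forall fun x => ?_)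
      have ht : (fun x : EuclideanSpace ℝ (Fin n) => ‖x‖ ^ 2).HasTemperateGrowth := by fun_prop
      simp only
      rw [SchwartzMap.smulLeftCLM_apply_apply ht, norm_smul]
      simp; ring
    have hQ : ∫⁻ x, ENNReal.ofReal (‖x‖ ^ 2) * ‖G x‖ₑ ^ 2 ≤ ENNReal.ofReal (D / (4 * π ^ 2)) := by
      have : ∀ x, ENNReal.ofReal (‖x‖ ^ 2) * ‖G x‖ₑ ^ 2 = ENNReal.ofReal (‖x‖ ^ 2 * ‖G x‖ ^ 2) := by
        intro x
        rw [ENNReal.ofReal_mul (by positivity), ← ofReal_norm, ENNReal.ofReal_pow (norm_nonneg (G x))]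
      simp_rw [this]
      rw [← ofReal_integral_eq_lintegral_ofReal hint (Filter.Eventually.of_forall fun x => by positivity)]
      apply ENNReal.ofReal_le_ofReal
      rw [le_div_iff₀ (by positivity)]
      linarith
    have hm := sob_main hn G _ (by positivity) hQ
    rw [hG] at hm
    have e : eLpNorm (fun x => (u x : ℂ)) (ENNReal.ofReal (2 * n / (n - 2 : ℝ))) volume
        = eLpNorm u (ENNReal.ofReal (2 * n / (n - 2 : ℝ))) volume :=
      eLpNorm_congr_norm_ae (Filter.Eventually.of_forall fun x => by simp)
    rw [e] at hm
    convert hm using 2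
    rw [Real.sqrt_div hD0.le, show 4 * π ^ 2 = (2 * π) ^ 2 by ring, Real.sqrt_sq (by positivity)]
    field_simp
  · intro i _
    have hc : Continuous (fderiv ℝ u) := hu.continuous_fderiv (by simp)
    apply Continuous.integrable_of_hasCompactSupport (by fun_prop)
    exact (hs.fderiv ℝ).comp_left (g := fun L : EuclideanSpace ℝ (Fin n) →L[ℝ] ℝ => ‖L (EuclideanSpace.single i 1)‖ ^ 2) (by simp)

lemma sob_lip (ε : ℝ) : LipschitzWith 1 (fun z : ℂ => √(‖z‖ ^ 2 + ε ^ 2) - ε) := by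
  apply LipschitzWith.of_le_add
  intro z w
  have h1 : ‖z‖ ≤ ‖w‖ + dist z w := by
    rw [dist_eq_norm]; have := norm_add_le w (z - w); simpa using this
  have h2 : ‖w‖ ≤ √(‖w‖ ^ 2 + ε ^ 2) := Real.le_sqrt_of_sq_le (by nlinarith)
  have h3 : √(‖w‖ ^ 2 + ε ^ 2) ^ 2 = ‖w‖ ^ 2 + ε ^ 2 := Real.sq_sqrt (by positivity)
  have h4 : 0 ≤ dist z w := dist_nonneg
  have : √(‖z‖ ^ 2 + ε ^ 2) ≤ √(‖w‖ ^ 2 + ε ^ 2) + dist z w := by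
    rw [Real.sqrt_le_left (by positivity)]
    have := norm_nonneg z
    have := norm_nonneg w
    nlinarith [mul_le_mul_of_nonneg_right h2 h4]
  linarith

lemma sob_smooth (ε : ℝ) (hε : 0 < ε) :
    ContDiff ℝ (⊤ : ℕ∞) (fun z : ℂ => √(‖z‖ ^ 2 + ε ^ 2) - ε) := by
  refine ContDiff.sub (ContDiff.sqrt ?_ ?_) contDiff_const
  · exact (contDiff_norm_sq ℝ).add contDiff_const
  · intro x; positivity

theorem stmt_14 (n : ℕ) (hn : 3 ≤ n)
    (f : EuclideanSpace ℝ (Fin n) → ℂ)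
    (hf_smooth : ContDiff ℝ (⊤ : ℕ∞) f) (hf_supp : HasCompactSupport f) :
    eLpNorm f (ENNReal.ofReal (2 * n / (n - 2 : ℝ))) volume
      ≤ ENNReal.ofReal ((1 / π)
        * ((n * (volume (Metric.ball (0 : EuclideanSpace ℝ (Fin n)) 1)).toReal
            / (n - 2 : ℝ)) ^ ((1 : ℝ) / n))
        * Real.sqrt (∫ x, ‖fderiv ℝ f x‖ ^ 2)) := by
  set K := (1 / π) * ((n * (volume (Metric.ball (0 : EuclideanSpace ℝ (Fin n)) 1)).toReal
            / (n - 2 : ℝ)) ^ ((1 : ℝ) / n)) with hK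
  set D := ∫ x, ‖fderiv ℝ f x‖ ^ 2 with hD
  have hD0 : 0 ≤ D := integral_nonneg fun x => by positivity
  -- the regularised modulus
  have hreg : ∀ δ > 0, ∀ ε > 0,
      eLpNorm (fun x => √(‖f x‖ ^ 2 + ε ^ 2) - ε) (ENNReal.ofReal (2 * n / (n - 2 : ℝ))) volume
        ≤ ENNReal.ofReal (K * √(D + δ)) := by
    intro δ hδ ε hε
    have hu : ContDiff ℝ (⊤ : ℕ∞) (fun x => √(‖f x‖ ^ 2 + ε ^ 2) - ε) :=
      (sob_smooth ε hε).comp hf_smooth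
    have hs : HasCompactSupport (fun x => √(‖f x‖ ^ 2 + ε ^ 2) - ε) :=
      hf_supp.comp_left (g := fun z : ℂ => √(‖z‖ ^ 2 + ε ^ 2) - ε) (by simp [Real.sqrt_sq hε.le])
    refine sob_real hn _ hu hs (D + δ) (by positivity) ?_
    refine le_trans ?_ (le_add_of_nonneg_right hδ.le)
    apply integral_mono (sob_integrable _ hu hs) (sob_integrable _ hf_smooth hf_supp)
    intro x
    have h1 : HasFDerivAt (fun x => √(‖f x‖ ^ 2 + ε ^ 2) - ε) _ x :=
      (((sob_smooth ε hε).differentiable (by simp)) (f x)).hasFDerivAt.comp x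
        ((hf_smooth.differentiable (by simp)) x).hasFDerivAt
    simp only
    rw [h1.fderiv]
    gcongr
    refine (ContinuousLinearMap.opNorm_comp_le _ _).trans ?_
    have := norm_fderiv_le_of_lipschitz ℝ (sob_lip ε) (x₀ := f x)
    calc _ ≤ ((1 : NNReal) : ℝ) * ‖fderiv ℝ f x‖ := by gcongr
      _ = _ := by simp
  have hδ : ∀ δ > 0, eLpNorm f (ENNReal.ofReal (2 * n / (n - 2 : ℝ))) volume
        ≤ ENNReal.ofReal (K * √(D + δ)) := by
    intro δ hδ
    have hlim : ∀ x, Filter.Tendsto (fun k : ℕ => √(‖f x‖ ^ 2 + (1 / ((k:ℝ) + 1)) ^ 2) - 1 / ((k:ℝ) + 1))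
        Filter.atTop (nhds ‖f x‖) := by
      intro x
      have h0 : Filter.Tendsto (fun ε : ℝ => √(‖f x‖ ^ 2 + ε ^ 2) - ε) (nhds 0) (nhds ‖f x‖) := by
        have hc : Continuous (fun ε : ℝ => √(‖f x‖ ^ 2 + ε ^ 2) - ε) := by fun_prop
        simpa using hc.tendsto 0
      exact h0.comp tendsto_one_div_add_atTop_nhds_zero_nat
    rw [← eLpNorm_norm]
    refine (Lp.eLpNorm_lim_le_liminf_eLpNorm (f := fun (k : ℕ) x => √(‖f x‖ ^ 2 + (1 / ((k:ℝ) + 1)) ^ 2) - 1 / ((k:ℝ) + 1))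
      (fun k => ?_) _ (Filter.Eventually.of_forall hlim)).trans ?_
    · have := hf_smooth.continuous
      exact Continuous.aestronglyMeasurable (by fun_prop)
    · refine Filter.liminf_le_of_le (by isBoundedDefault) fun b hb => ?_
      obtain ⟨k, hk⟩ := hb.exists
      exact hk.trans (hreg δ hδ _ (by positivity))
  have ht : Filter.Tendsto (fun δ : ℝ => ENNReal.ofReal (K * √(D + δ))) (nhdsWithin 0 (Set.Ioi 0))
      (nhds (ENNReal.ofReal (K * √D))) := by
    have hc : Continuous (fun δ : ℝ => ENNReal.ofReal (K * √(D + δ))) :=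
      ENNReal.continuous_ofReal.comp (by fun_prop)
    have := hc.tendsto 0
    simp only [add_zero] at this
    exact this.mono_left nhdsWithin_le_nhds
  exact ge_of_tendsto ht (by filter_upwards [self_mem_nhdsWithin] with δ h using hδ δ h)
end

section
/- Let 2 ≤ p < ∞. For a type S let ℓ^q(S) denote the Banach space of q-summable complex-valued functions on S; since p ≥ 2, every element of ℓ²(S) lies in ℓ^p(S). Let I₀, I₁, J₀, J₁, J₂ be types and suppose given linear maps d : ℓ^p(I₀) → ℓ^p(I₁), d'₀ : ℓ^p(J₀) → ℓ^p(J₁), d'₁ : ℓ^p(J₁) → ℓ^p(J₂), f₀ : ℓ^p(I₀) → ℓ^p(J₀), f₁ : ℓ^p(I₁) → ℓ^p(J₁), g₀ : ℓ^p(J₀) → ℓ^p(I₀), g₁ : ℓ^p(J₁) → ℓ^p(I₁), h₁ : ℓ^p(J₁) → ℓ^p(J₀), h₂ : ℓ^p(J₂) → ℓ^p(J₁), each of which maps the ℓ² subspace into the corresponding ℓ² subspace and is bounded both for the ℓ^p norms and for the ℓ² norms on these subspaces. Assume d'₁ ∘ d'₀ = 0, f₁ ∘ d = d'₀ ∘ f₀,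 g₁ ∘ d'₀ = d ∘ g₀, and f₁ ∘ g₁ = Id + d'₀ ∘ h₁ + h₂ ∘ d'₁ on ℓ^p(J₁). If the closure of d(ℓ²(I₀)) in ℓ²(I₁) is contained in d(ℓ^p(I₀)), then the closure of d'₀(ℓ²(J₀)) in ℓ²(J₁) is contained in d'₀(ℓ^p(J₀)). -/
open scoped ENNReal

noncomputable section

/-- The element of `ℓ²(S)` determined by a square-summable function. -/
def mkL2 {S : Type*} (f : S → ℂ) (hf : Memℓp f 2) : lp (fun _ : S => ℂ) 2 :=
  ⟨f, hf⟩

/-- The inclusion `ℓ²(S) ⊆ ℓᵖ(S)` for `2 ≤ p`. -/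
def inclL2 {S : Type*} {p : ℝ≥0∞} (hp : 2 ≤ p) (u : lp (fun _ : S => ℂ) 2) :
    lp (fun _ : S => ℂ) p :=
  ⟨↑u, (lp.memℓp u).of_exponent_ge hp⟩

/-- A map of `ℓᵖ` spaces sends the `ℓ²` subspace into the `ℓ²` subspace. -/
def MapsL2 {S T : Type*} {p : ℝ≥0∞} [Fact (1 ≤ p)]
    (d : lp (fun _ : S => ℂ) p →L[ℂ] lp (fun _ : T => ℂ) p) : Prop :=
  ∀ u : lp (fun _ : S => ℂ) p, Memℓp (↑u) 2 → Memℓp (↑(d u)) 2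

/-- A map of `ℓᵖ` spaces is bounded for the `ℓ²` norms on the `ℓ²` subspaces. -/
def BddL2 {S T : Type*} {p : ℝ≥0∞} [Fact (1 ≤ p)]
    (d : lp (fun _ : S => ℂ) p →L[ℂ] lp (fun _ : T => ℂ) p) : Prop :=
  ∃ K : ℝ, ∀ (u : lp (fun _ : S => ℂ) p) (hu : Memℓp (↑u) 2)
    (hdu : Memℓp (↑(d u)) 2), ‖mkL2 _ hdu‖ ≤ K * ‖mkL2 _ hu‖

/-- The image `d(ℓ²(S))` of the `ℓ²` subspace, viewed inside `ℓ²(T)`. -/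
def rangeL2 {S T : Type*} {p : ℝ≥0∞} [Fact (1 ≤ p)] (hp : 2 ≤ p)
    (d : lp (fun _ : S => ℂ) p →L[ℂ] lp (fun _ : T => ℂ) p) :
    Set (lp (fun _ : T => ℂ) 2) :=
  {v | ∃ u : lp (fun _ : S => ℂ) 2, (↑(d (inclL2 hp u)) : T → ℂ) = ↑v}

/-- The image `d(ℓᵖ(S))`, viewed as a set of elements of `ℓ²(T)`. -/
def rangeLpInL2 {S T : Type*} {p : ℝ≥0∞} [Fact (1 ≤ p)]
    (d : lp (fun _ : S => ℂ) p →L[ℂ] lp (fun _ : T => ℂ) p) :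
    Set (lp (fun _ : T => ℂ) 2) :=
  {v | ∃ w : lp (fun _ : S => ℂ) p, (↑(d w) : T → ℂ) = ↑v}

/-- The map induced on the `ℓ²` subspaces. -/
def resL2 {S T : Type*} {p : ℝ≥0∞} [Fact (1 ≤ p)] (hp : 2 ≤ p)
    (d : lp (fun _ : S => ℂ) p →L[ℂ] lp (fun _ : T => ℂ) p) (hd : MapsL2 d)
    (u : lp (fun _ : S => ℂ) 2) : lp (fun _ : T => ℂ) 2 :=
  mkL2 _ (hd (inclL2 hp u) (lp.memℓp u))

theorem inclL2_resL2 {S T : Type*} {p : ℝ≥0∞} [Fact (1 ≤ p)] (hp : 2 ≤ p)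
    (d : lp (fun _ : S => ℂ) p →L[ℂ] lp (fun _ : T => ℂ) p) (hd : MapsL2 d)
    (u : lp (fun _ : S => ℂ) 2) : inclL2 hp (resL2 hp d hd u) = d (inclL2 hp u) := rfl

theorem inclL2_sub {S : Type*} {p : ℝ≥0∞} (hp : 2 ≤ p) (u v : lp (fun _ : S => ℂ) 2) :
    inclL2 hp (u - v) = inclL2 hp u - inclL2 hp v := rfl

theorem inclL2_inj {S : Type*} {p : ℝ≥0∞} (hp : 2 ≤ p) {u v : lp (fun _ : S => ℂ) 2}
    (h : inclL2 hp u = inclL2 hp v) : u = v := by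
  have h' : (inclL2 hp u : S → ℂ) = (inclL2 hp v : S → ℂ) := by rw [h]
  exact lp.ext h'

theorem eq_inclL2_iff {S : Type*} {p : ℝ≥0∞} (hp : 2 ≤ p) (w : lp (fun _ : S => ℂ) p)
    (v : lp (fun _ : S => ℂ) 2) : w = inclL2 hp v ↔ (w : S → ℂ) = (v : S → ℂ) := by
  constructor
  · intro h
    rw [h]
    rfl
  · intro h
    exact lp.ext h

theorem inclL2_zero {S : Type*} {p : ℝ≥0∞} (hp : 2 ≤ p) :
    inclL2 hp (0 : lp (fun _ : S => ℂ) 2) = 0 := rfl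

theorem resL2_continuous {S T : Type*} {p : ℝ≥0∞} [Fact (1 ≤ p)] (hp : 2 ≤ p)
    (d : lp (fun _ : S => ℂ) p →L[ℂ] lp (fun _ : T => ℂ) p) (hd : MapsL2 d)
    (hb : BddL2 d) : Continuous (resL2 hp d hd) := by
  obtain ⟨K, hK⟩ := hb
  have hlip : LipschitzWith (Real.toNNReal K) (resL2 hp d hd) := by
    refine LipschitzWith.of_dist_le_mul fun u v => ?_
    rw [dist_eq_norm, dist_eq_norm]
    have h1 : resL2 hp d hd u - resL2 hp d hd v = resL2 hp d hd (u - v) := by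
      apply inclL2_inj hp
      rw [inclL2_sub, inclL2_resL2, inclL2_resL2, inclL2_resL2, inclL2_sub, map_sub]
    rw [h1]
    have h2 : ‖resL2 hp d hd (u - v)‖ ≤ K * ‖u - v‖ :=
      hK (inclL2 hp (u - v)) (lp.memℓp (u - v)) (hd _ (lp.memℓp (u - v)))
    exact h2.trans (mul_le_mul_of_nonneg_right (Real.le_coe_toNNReal K) (norm_nonneg _))
  exact hlip.continuous

/-- Proposition 5.3 of the paper: invariance of the torsion
inclusion (9) under bounded `ℓ²`/`ℓᵖ` homotopies. Given chain maps `f`, `g`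
between two complexes, bounded both in `ℓᵖ` and in `ℓ²` norms, commuting with
the coboundaries, and a bounded homotopy `f₁ ∘ g₁ = Id + d'₀ ∘ h₁ + h₂ ∘ d'₁`,
if `closure_{ℓ²}(d(ℓ²(I₀))) ⊆ d(ℓᵖ(I₀))`, then
`closure_{ℓ²}(d'₀(ℓ²(J₀))) ⊆ d'₀(ℓᵖ(J₀))`. -/
theorem stmt_16 {p : ℝ≥0∞} [Fact (1 ≤ p)] (hp2 : 2 ≤ p) (hp_ne_top : p ≠ ⊤)
    {I₀ I₁ J₀ J₁ J₂ : Type*}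
    (d : lp (fun _ : I₀ => ℂ) p →L[ℂ] lp (fun _ : I₁ => ℂ) p)
    (d'₀ : lp (fun _ : J₀ => ℂ) p →L[ℂ] lp (fun _ : J₁ => ℂ) p)
    (d'₁ : lp (fun _ : J₁ => ℂ) p →L[ℂ] lp (fun _ : J₂ => ℂ) p)
    (f₀ : lp (fun _ : I₀ => ℂ) p →L[ℂ] lp (fun _ : J₀ => ℂ) p)
    (f₁ : lp (fun _ : I₁ => ℂ) p →L[ℂ] lp (fun _ : J₁ => ℂ) p)
    (g₀ : lp (fun _ : J₀ => ℂ) p →L[ℂ] lp (fun _ : I₀ => ℂ) p)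
    (g₁ : lp (fun _ : J₁ => ℂ) p →L[ℂ] lp (fun _ : I₁ => ℂ) p)
    (h₁ : lp (fun _ : J₁ => ℂ) p →L[ℂ] lp (fun _ : J₀ => ℂ) p)
    (h₂ : lp (fun _ : J₂ => ℂ) p →L[ℂ] lp (fun _ : J₁ => ℂ) p)
    (hd_l2 : MapsL2 d) (hd_bdd : BddL2 d)
    (hd'₀_l2 : MapsL2 d'₀) (hd'₀_bdd : BddL2 d'₀)
    (hd'₁_l2 : MapsL2 d'₁) (hd'₁_bdd : BddL2 d'₁)
    (hf₀_l2 : MapsL2 f₀) (hf₀_bdd : BddL2 f₀)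
    (hf₁_l2 : MapsL2 f₁) (hf₁_bdd : BddL2 f₁)
    (hg₀_l2 : MapsL2 g₀) (hg₀_bdd : BddL2 g₀)
    (hg₁_l2 : MapsL2 g₁) (hg₁_bdd : BddL2 g₁)
    (hh₁_l2 : MapsL2 h₁) (hh₁_bdd : BddL2 h₁)
    (hh₂_l2 : MapsL2 h₂) (hh₂_bdd : BddL2 h₂)
    (h_complex : ∀ u, d'₁ (d'₀ u) = 0)
    (h_comm_f : ∀ u, f₁ (d u) = d'₀ (f₀ u))
    (h_comm_g : ∀ u, g₁ (d'₀ u) = d (g₀ u))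
    (h_homotopy : ∀ u, f₁ (g₁ u) = u + d'₀ (h₁ u) + h₂ (d'₁ u))
    (h_X : closure (rangeL2 hp2 d) ⊆ rangeLpInL2 d) :
    closure (rangeL2 hp2 d'₀) ⊆ rangeLpInL2 d'₀ := by
  intro v hv
  have hgv : resL2 hp2 g₁ hg₁_l2 v ∈ closure (rangeL2 hp2 d) := by
    refine map_mem_closure (resL2_continuous hp2 g₁ hg₁_l2 hg₁_bdd) hv ?_
    rintro x ⟨u, hu⟩
    have hx : d'₀ (inclL2 hp2 u) = inclL2 hp2 x := (eq_inclL2_iff hp2 _ _).2 hu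
    refine ⟨resL2 hp2 g₀ hg₀_l2 u, ?_⟩
    have : d (inclL2 hp2 (resL2 hp2 g₀ hg₀_l2 u)) =
        inclL2 hp2 (resL2 hp2 g₁ hg₁_l2 x) := by
      rw [inclL2_resL2, inclL2_resL2, ← hx, h_comm_g]
    exact (eq_inclL2_iff hp2 _ _).1 this
  have hdv : d'₁ (inclL2 hp2 v) = 0 := by
    have hcl : IsClosed {x | resL2 hp2 d'₁ hd'₁_l2 x = 0} :=
      isClosed_eq (resL2_continuous hp2 d'₁ hd'₁_l2 hd'₁_bdd) continuous_const
    have hsub : rangeL2 hp2 d'₀ ⊆ {x | resL2 hp2 d'₁ hd'₁_l2 x = 0} := by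
      rintro x ⟨u, hu⟩
      have hx : d'₀ (inclL2 hp2 u) = inclL2 hp2 x := (eq_inclL2_iff hp2 _ _).2 hu
      apply inclL2_inj hp2
      rw [inclL2_resL2, ← hx, h_complex, inclL2_zero]
    have h0 : resL2 hp2 d'₁ hd'₁_l2 v = 0 := closure_minimal hsub hcl hv
    rw [← inclL2_resL2 hp2 d'₁ hd'₁_l2, h0, inclL2_zero]
  obtain ⟨w, hw⟩ := h_X hgv
  have hw' : d w = g₁ (inclL2 hp2 v) := by
    rw [← inclL2_resL2 hp2 g₁ hg₁_l2]
    exact (eq_inclL2_iff hp2 _ _).2 hw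
  refine ⟨f₀ w - h₁ (inclL2 hp2 v), ?_⟩
  have : d'₀ (f₀ w - h₁ (inclL2 hp2 v)) = inclL2 hp2 v := by
    rw [map_sub, ← h_comm_f, hw', h_homotopy, hdv, map_zero]
    abel
  exact (eq_inclL2_iff hp2 _ _).1 this
end
end
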